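/- Let N be prime and E an elliptic curve over F_p with a point P of exact order N, where p + 1 + 2√p < 2N. Then #E(F_p) = N, and consequently p must be prime if N·P = 0 certifies group order N within the Hasse bound (Pocklington-style primality certificate via elliptic curves). -/

import Mathlib

open WeierstrassCurve

/-!
Call the degree of the `x`-coordinate of a point of `E` over its function field, as a rational
function in `X`, the height of the point. The unordered pair of the `x`-coordinates of `P + Q` and
`P - Q` is a quadratic function of that of `P` and `Q`, and since the discriminant is a nonzero
constant this function has no zeros at any place of the projective line, infinity included. So
nothing cancels, and `h(P + Q) + h(P - Q) = 2 h(P) + 2 h(Q)` holds exactly.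

Let `P = (X ^ q, Y ^ q)` be the Frobenius image of the generic point `Q = (X, Y)`. By the
parallelogram law `h(m P + n Q) = q m² + (q + 1 - d) m n + n²` with `d = h(P - Q)`, so the
discriminant of this nonnegative form is at most zero and `d ≤ q + 1 + 2√q`. The `x`-coordinate of
`P - Q` is a quotient of a polynomial of degree `2q + 1` by `(X ^ q - X) ^ 2`, in which a linear
factor `X - c` cancels to a multiplicity of at most `2` minus the number of points of `E(F)` above
`c`. Hence `#E(F) ≤ d`, and the multiple `#E(F)` of `N`, being less than `2N`, is `N`.
-/

open Polynomial

section SymMul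

variable {R S : Type*} [CommRing R] [CommRing S]

/-- The coefficients of the product of the binary linear forms with coefficients `u` and `v`. It is
the map `ℙ¹ × ℙ¹ → Sym² ℙ¹ ≃ ℙ²` in homogeneous coordinates. -/
def symMul (u v : Fin 2 → R) : Fin 3 → R :=
  ![u 0 * v 0, u 0 * v 1 + u 1 * v 0, u 1 * v 1]

theorem map_comp_symMul (φ : R →+* S) (u v : Fin 2 → R) :
    φ ∘ symMul u v = symMul (φ ∘ u) (φ ∘ v) := by
  ext i
  fin_cases i <;> simp [symMul]

theorem symMul_smul_smul (a b : R) (u v : Fin 2 → R) :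
    symMul (a • u) (b • v) = (a * b) • symMul u v := by
  ext i
  fin_cases i <;> simp [symMul] <;> ring

theorem symMul_ne_zero [IsDomain R] {u v : Fin 2 → R} (hu : u ≠ 0) (hv : v ≠ 0) :
    symMul u v ≠ 0 := by
  intro h
  have h0 : u 0 * v 0 = 0 := congrFun h 0
  have h1 : u 0 * v 1 + u 1 * v 0 = 0 := congrFun h 1
  have h2 : u 1 * v 1 = 0 := congrFun h 2
  simp only [ne_eq, funext_iff, Fin.forall_fin_two, Pi.zero_apply] at hu hv
  rcases mul_eq_zero.1 h0 with h0 | h0 <;> rcases mul_eq_zero.1 h2 with h2 | h2 <;> simp_all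

/-- The value of the polynomial map `WeierstrassCurve.addSubMap` at `w`. It takes the unordered pair
of the `x`-coordinates of `P` and `Q`, encoded by `symMul`, to that of `P + Q` and `P - Q`. -/
noncomputable def addSub (W : WeierstrassCurve R) (w : Fin 3 → R) : Fin 3 → R :=
  fun i ↦ (W.addSubMap i).eval w

theorem addSub_eq (W : WeierstrassCurve R) (w : Fin 3 → R) :
    addSub W w =
      ![w 0 ^ 2 - W.b₄ * w 0 * w 2 - W.b₆ * w 1 * w 2 - W.b₈ * w 2 ^ 2,
        2 * w 1 * w 0 + W.b₂ * w 0 * w 2 + W.b₄ * w 1 * w 2 + W.b₆ * w 2 ^ 2,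
        w 1 ^ 2 - 4 * w 0 * w 2] := by
  ext i
  fin_cases i <;> simp [addSub, addSubMap]

theorem map_comp_addSub (φ : R →+* S) (W : WeierstrassCurve R) (w : Fin 3 → R) :
    φ ∘ addSub W w = addSub (W.map φ) (φ ∘ w) := by
  ext i
  fin_cases i <;> simp [addSub_eq, map_ofNat]

theorem addSub_smul (W : WeierstrassCurve R) (a : R) (w : Fin 3 → R) :
    addSub W (a • w) = a ^ 2 • addSub W w := by
  ext i
  fin_cases i <;> simp [addSub_eq] <;> ring

end SymMul

section GroupLaw

variable {K : Type*} [Field K] {V : Affine K}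

theorem sym2x_eq_symMul (P Q : V.Point) : P.sym2x Q = symMul P.xRep Q.xRep := rfl

theorem addSub_self {x y : K} (h : V.Equation x y) :
    addSub V ![x * x, x + x, 1] =
      ![(3 * x ^ 2 + 2 * V.a₂ * x + V.a₄ - V.a₁ * y) ^ 2 +
          V.a₁ * (3 * x ^ 2 + 2 * V.a₂ * x + V.a₄ - V.a₁ * y) * (y - V.negY x y) -
          (V.a₂ + 2 * x) * (y - V.negY x y) ^ 2,
        (y - V.negY x y) ^ 2, 0] := by
  have h := (V.equation_iff x y).1 h
  ext i
  fin_cases i <;> simp only [Fin.zero_eta, Fin.mk_one, Fin.reduceFinMk, Matrix.cons_val, addSub_eq,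
    b₂, b₄, b₆, b₈, Affine.negY]
  · linear_combination (V.a₁ ^ 2 + 4 * V.a₂ + 8 * x) * h
  · linear_combination (-4) * h
  · ring

variable [DecidableEq K]

theorem exists_addSub_sym2x_self (P : V.Point) :
    ∃ μ : K, μ ≠ 0 ∧ addSub V (P.sym2x P) = μ • (P + P).sym2x 0 := by
  rcases P with _ | ⟨x, y, h⟩
  · exact ⟨1, one_ne_zero, by ext i; fin_cases i <;> simp [addSub_eq, ← Affine.Point.zero_def]⟩
  rw [Affine.Point.sym2x_some_some, addSub_self h.1]
  by_cases hy : y = V.negY x y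
  · have hn : 3 * x ^ 2 + 2 * V.a₂ * x + V.a₄ - V.a₁ * y ≠ 0 := by
      rcases ((V.nonsingular_iff x y).1 h).2 with hx | hy'
      · contrapose! hx
        linear_combination -hx
      · exact absurd hy hy'
    refine ⟨_, pow_ne_zero 2 hn, ?_⟩
    rw [Affine.Point.add_self_of_Y_eq hy, Affine.Point.sym2x_zero_zero, sub_eq_zero.2 hy]
    simp
  · have hψ := sub_ne_zero.2 hy
    refine ⟨_, pow_ne_zero 2 hψ, ?_⟩
    rw [Affine.Point.add_self_of_Y_ne hy, Affine.Point.sym2x_some_zero, Affine.slope_of_Y_ne rfl hy,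
      Affine.addX]
    generalize y - V.negY x y = ψ at hψ ⊢
    ext i
    fin_cases i <;> simp only [Fin.zero_eta, Fin.mk_one, Fin.reduceFinMk, Matrix.cons_val,
      Pi.smul_apply, smul_eq_mul, mul_one, mul_zero]
    field_simp
    ring

theorem addSub_sym2x_of_X_ne {x₁ y₁ x₂ y₂ : K} (h₁ : V.Nonsingular x₁ y₁)
    (h₂ : V.Nonsingular x₂ y₂) (hx : x₁ ≠ x₂) :
    addSub V ((Affine.Point.some _ _ h₁).sym2x (.some _ _ h₂)) = (x₁ - x₂) ^ 2 •
      (Affine.Point.some _ _ h₁ + .some _ _ h₂).sym2x (.some _ _ h₁ - .some _ _ h₂) := by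
  have hd := sub_ne_zero.2 hx
  have e₁ := (V.equation_iff x₁ y₁).1 h₁.1
  have e₂ := (V.equation_iff x₂ y₂).1 h₂.1
  rw [sub_eq_add_neg (Affine.Point.some _ _ h₁), Affine.Point.neg_some, Affine.Point.add_of_X_ne hx,
    Affine.Point.add_of_X_ne hx, Affine.Point.sym2x_some_some, Affine.Point.sym2x_some_some,
    Affine.slope_of_X_ne hx, Affine.slope_of_X_ne hx, Affine.addX, Affine.addX, Affine.negY]
  ext i
  fin_cases i <;> simp only [Fin.zero_eta, Fin.mk_one, Fin.reduceFinMk, Matrix.cons_val, addSub_eq,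
    b₂, b₄, b₆, b₈, Pi.smul_apply, smul_eq_mul]
  · field_simp
    set k := V.a₁ * x₂ + V.a₃
    set l := V.a₁ * x₁ + V.a₃
    set c := (V.a₂ + x₁ + x₂) * (x₁ - x₂) ^ 2
    set f₁ := x₁ ^ 3 + V.a₂ * x₁ ^ 2 + V.a₄ * x₁ + V.a₆
    set f₂ := x₂ ^ 3 + V.a₂ * x₂ ^ 2 + V.a₄ * x₂ + V.a₆
    linear_combination (4 * (y₂ ^ 2 + k * y₂) + k ^ 2) * e₁ + (4 * f₁ + l ^ 2) * e₂ -
      ((y₁ + y₂ + k) ^ 2 + V.a₁ * (y₁ + y₂ + k) * (x₁ - x₂) - c + f₁ + f₂ - c -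
        y₂ * (2 * y₁ + l) - k * y₁) * (e₁ + e₂)
  · field_simp
    linear_combination -2 * (e₁ + e₂)
  · ring

theorem exists_addSub_sym2x (P Q : V.Point) :
    ∃ μ : K, μ ≠ 0 ∧ addSub V (P.sym2x Q) = μ • (P + Q).sym2x (P - Q) := by
  by_cases hPQ : P.xRep = Q.xRep
  · rcases Affine.Point.xRep_eq_xRep_iff.1 hPQ with rfl | rfl
    · simpa using exists_addSub_sym2x_self P
    · obtain ⟨μ, hμ, h⟩ := exists_addSub_sym2x_self Q
      exact ⟨μ, hμ, by
        rw [Affine.Point.sym2x_neg_left, h, neg_add_cancel, Affine.Point.sym2x_comm, ← neg_add',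
          Affine.Point.sym2x_neg_right]⟩
  rcases P with _ | ⟨x₁, y₁, h₁⟩ <;> rcases Q with _ | ⟨x₂, y₂, h₂⟩
  · exact absurd rfl hPQ
  · refine ⟨1, one_ne_zero, ?_⟩
    ext i; fin_cases i <;> simp [addSub_eq, ← Affine.Point.zero_def, ← pow_two, two_mul]
  · refine ⟨1, one_ne_zero, ?_⟩
    ext i; fin_cases i <;> simp [addSub_eq, ← Affine.Point.zero_def, ← pow_two, two_mul]
  · refine ⟨_, pow_ne_zero 2 (sub_ne_zero.2 ?_), addSub_sym2x_of_X_ne h₁ h₂ ?_⟩ <;>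
    simpa using hPQ

end GroupLaw

section Polynomial

theorem prod_pow_eq_prod_map_toMultiset {σ M : Type*} [CommMonoid M] (m : σ →₀ ℕ) (v : σ → M) :
    (m.prod fun i k ↦ v i ^ k) = (m.toMultiset.map v).prod := by
  rw [Finsupp.toMultiset_map, Finsupp.prod_toMultiset,
    Finsupp.prod_mapDomain_index (by simp) (by simp [pow_add])]

variable {σ R : Type*} [CommSemiring R] {v : σ → R[X]} {n : ℕ}

theorem natDegree_finsuppProd_pow_le (hv : ∀ i, (v i).natDegree ≤ n) (m : σ →₀ ℕ) :
    (m.prod fun i k ↦ v i ^ k).natDegree ≤ m.degree * n := by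
  refine (natDegree_prod_le _ _).trans ?_
  rw [Finsupp.degree_apply, Finset.sum_mul]
  exact Finset.sum_le_sum fun i _ ↦ natDegree_pow_le_of_le _ (hv i)

theorem coeff_finsuppProd_pow (hv : ∀ i, (v i).natDegree ≤ n) (m : σ →₀ ℕ) :
    (m.prod fun i k ↦ v i ^ k).coeff (m.degree * n) = m.prod fun i k ↦ (v i).coeff n ^ k := by
  rw [prod_pow_eq_prod_map_toMultiset, prod_pow_eq_prod_map_toMultiset]
  have h := coeff_multiset_prod_of_natDegree_le (m.toMultiset.map v) n (by simp [hv])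
  rwa [Multiset.card_map, Finsupp.card_toMultiset, Multiset.map_map] at h

theorem degree_eq_of_isHomogeneous {P : MvPolynomial σ R} {d : ℕ} (hP : P.IsHomogeneous d)
    {m : σ →₀ ℕ} (hm : m ∈ P.support) : m.degree = d := by
  rw [Finsupp.degree_eq_weight_one]
  exact hP (MvPolynomial.mem_support_iff.1 hm)

theorem natDegree_aeval_le_of_isHomogeneous {P : MvPolynomial σ R} {d : ℕ} (hP : P.IsHomogeneous d)
    (hv : ∀ i, (v i).natDegree ≤ n) : (MvPolynomial.aeval v P).natDegree ≤ d * n := by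
  rw [MvPolynomial.aeval_def, MvPolynomial.eval₂_eq]
  refine natDegree_sum_le_of_forall_le _ _ fun m hm ↦ (natDegree_C_mul_le _ _).trans ?_
  rw [← degree_eq_of_isHomogeneous hP hm]
  exact natDegree_finsuppProd_pow_le hv m

theorem coeff_aeval_of_isHomogeneous {P : MvPolynomial σ R} {d : ℕ} (hP : P.IsHomogeneous d)
    (hv : ∀ i, (v i).natDegree ≤ n) :
    (MvPolynomial.aeval v P).coeff (d * n) = MvPolynomial.eval (fun i ↦ (v i).coeff n) P := by
  rw [MvPolynomial.aeval_def, MvPolynomial.eval₂_eq, MvPolynomial.eval_eq, finsetSum_coeff]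
  refine Finset.sum_congr rfl fun m hm ↦ ?_
  rw [algebraMap_eq, coeff_C_mul, ← degree_eq_of_isHomogeneous hP hm]
  exact congrArg _ (coeff_finsuppProd_pow hv m)

end Polynomial

section Morphism

theorem span_range_eq_top_iff {ι A : Type*} [CommRing A] {v : ι → A} :
    Ideal.span (Set.range v) = ⊤ ↔
      ∀ M : Ideal A, M.IsMaximal → Ideal.Quotient.mk M ∘ v ≠ 0 := by
  have key (M : Ideal A) : Ideal.Quotient.mk M ∘ v = 0 ↔ Ideal.span (Set.range v) ≤ M := by
    simp [funext_iff, Ideal.span_le, Set.range_subset_iff, Ideal.Quotient.eq_zero_iff_mem]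
  simp only [ne_eq, key]
  constructor
  · intro h M hM hle
    exact hM.ne_top (top_le_iff.1 (h ▸ hle))
  · intro h
    by_contra hne
    obtain ⟨M, hM, hle⟩ := Ideal.exists_le_maximal _ hne
    exact h M hM hle

theorem exists_eq_comp_of_symMul {A B : Type*} [CommRing A] [CommRing B] (φ : A →+* B)
    {w : Fin 3 → A} {t : Fin 2 → A} {ρ : Fin 2 → B} (ht : Ideal.span (Set.range t) = ⊤)
    (h : φ ∘ w = symMul ρ (φ ∘ t)) : ∃ e : Fin 2 → A, ρ = φ ∘ e := by
  have h0 : φ (w 0) = ρ 0 * φ (t 0) := congrFun h 0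
  have h1 : φ (w 1) = ρ 0 * φ (t 1) + ρ 1 * φ (t 0) := congrFun h 1
  have h2 : φ (w 2) = ρ 1 * φ (t 1) := congrFun h 2
  have hco : IsCoprime (t 0) (t 1) := by
    rw [← Ideal.isCoprime_span_singleton_iff, Ideal.isCoprime_iff_sup_eq, ← ht, ← Ideal.span_union]
    congr 1; ext; simp [eq_comm, or_comm]
  obtain ⟨a, b, hab⟩ := hco.pow_right (n := 2)
  obtain ⟨c, d, hcd⟩ := hco.pow_left (m := 2)
  have hab' := congrArg φ hab
  have hcd' := congrArg φ hcd
  simp only [map_add, map_mul, map_pow, map_one] at hab' hcd'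
  refine ⟨![a * w 0 + b * (w 1 * t 1 - w 2 * t 0), c * (w 1 * t 0 - w 0 * t 1) + d * w 2], ?_⟩
  ext i
  fin_cases i <;> simp only [Fin.zero_eta, Fin.mk_one, Function.comp_apply, Matrix.cons_val,
    map_add, map_sub, map_mul, h0, h1, h2]
  · linear_combination (-ρ 0) * hab'
  · linear_combination (-ρ 1) * hcd'

variable {F ι : Type*} [Field F]

/-- `v` gives homogeneous coordinates of a morphism `ℙ¹ → ℙ^ι` of degree `n`: the polynomials `v i`
have degree at most `n` and no common zero on the affine line, nor at infinity. -/
structure IsMorphismOfDegree (v : ι → F[X]) (n : ℕ) : Prop where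
  span_eq_top : Ideal.span (Set.range v) = ⊤
  natDegree_le (i : ι) : (v i).natDegree ≤ n
  coeff_ne_zero : (fun i ↦ (v i).coeff n) ≠ 0

namespace IsMorphismOfDegree

theorem le_of_natDegree_le {v : ι → F[X]} {m n : ℕ} (hm : ∀ i, (v i).natDegree ≤ m)
    (hn : IsMorphismOfDegree v n) : n ≤ m := by
  obtain ⟨i, hi⟩ := Function.ne_iff.1 hn.coeff_ne_zero
  exact (le_natDegree_of_ne_zero hi).trans (hm i)

theorem degree_unique {v : ι → F[X]} {m n : ℕ} (hm : IsMorphismOfDegree v m)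
    (hn : IsMorphismOfDegree v n) : m = n :=
  le_antisymm (hm.le_of_natDegree_le hn.natDegree_le) (hn.le_of_natDegree_le hm.natDegree_le)

end IsMorphismOfDegree

theorem exists_isMorphismOfDegree [Finite ι] {v : ι → F[X]} (hv : Ideal.span (Set.range v) = ⊤) :
    ∃ n, IsMorphismOfDegree v n := by
  have : Nonempty ι := by
    by_contra h
    rw [not_nonempty_iff] at h
    simp [Set.range_eq_empty] at hv
  obtain ⟨i, hi⟩ := Finite.exists_max fun i ↦ (v i).degree
  refine ⟨(v i).natDegree, hv, fun j ↦ natDegree_le_natDegree (hi j), fun h ↦ ?_⟩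
  have hvi : v i = 0 := leadingCoeff_eq_zero.1 (congrFun h i)
  have hv0 (j : ι) : v j = 0 := by simpa [hvi] using hi j
  simp [funext hv0] at hv

namespace IsMorphismOfDegree

theorem symMul {u v : Fin 2 → F[X]} {m n : ℕ} (hu : IsMorphismOfDegree u m)
    (hv : IsMorphismOfDegree v n) : IsMorphismOfDegree (symMul u v) (m + n) where
  span_eq_top := span_range_eq_top_iff.2 fun M hM ↦ by
    rw [map_comp_symMul]
    exact symMul_ne_zero (span_range_eq_top_iff.1 hu.span_eq_top M hM)
      (span_range_eq_top_iff.1 hv.span_eq_top M hM)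
  natDegree_le i := by
    have h (i j) : (u i * v j).natDegree ≤ m + n :=
      natDegree_mul_le_of_le (hu.natDegree_le i) (hv.natDegree_le j)
    fin_cases i
    exacts [h 0 0, natDegree_add_le_of_degree_le (h 0 1) (h 1 0), h 1 1]
  coeff_ne_zero := by
    have h (i j) : (u i * v j).coeff (m + n) = (u i).coeff m * (v j).coeff n :=
      coeff_mul_add_eq_of_natDegree_le (hu.natDegree_le i) (hv.natDegree_le j)
    convert symMul_ne_zero hu.coeff_ne_zero hv.coeff_ne_zero using 1
    ext i
    fin_cases i <;> simp [_root_.symMul, h]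

theorem of_symMul {u v : Fin 2 → F[X]} {k n : ℕ} (huv : IsMorphismOfDegree (_root_.symMul u v) k)
    (hv : IsMorphismOfDegree v n) : ∃ m, IsMorphismOfDegree u m ∧ m + n = k := by
  have hu : Ideal.span (Set.range u) = ⊤ := span_range_eq_top_iff.2 fun M hM h0 ↦ by
    refine span_range_eq_top_iff.1 huv.span_eq_top M hM ?_
    rw [map_comp_symMul, h0]
    ext i
    fin_cases i <;> simp [_root_.symMul]
  obtain ⟨m, hm⟩ := exists_isMorphismOfDegree hu
  exact ⟨m, hm, (hm.symMul hv).degree_unique huv⟩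

theorem addSub (W : WeierstrassCurve F) [W.IsElliptic] {w : Fin 3 → F[X]} {n : ℕ}
    (hw : IsMorphismOfDegree w n) : IsMorphismOfDegree (addSub (W.map C) w) (2 * n) := by
  have haeval (i) : _root_.addSub (W.map C) w i = MvPolynomial.aeval w (W.addSubMap i) := by
    fin_cases i <;> simp [addSub_eq, addSubMap, map_ofNat]
  refine ⟨span_range_eq_top_iff.2 fun M hM ↦ ?_, fun i ↦ ?_, ?_⟩
  · have := Ideal.Quotient.field M
    rw [map_comp_addSub]
    exact addSubMap_ne_zero _ (span_range_eq_top_iff.1 hw.span_eq_top M hM)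
  · rw [haeval]
    exact natDegree_aeval_le_of_isHomogeneous (W.isHomogeneous_addSubMap i) hw.natDegree_le
  · simp only [haeval, coeff_aeval_of_isHomogeneous (W.isHomogeneous_addSubMap _) hw.natDegree_le]
    exact addSubMap_ne_zero W hw.coeff_ne_zero

end IsMorphismOfDegree

end Morphism

section Height

variable {F K : Type*} [Field F] [Field K] [Algebra F[X] K]

variable (F) in
/-- The `x`-coordinate of `P` is a rational function of degree `n` with coefficients in `F`, the
point at infinity counting as the constant `1 / 0`. This `n` is the naive height of `P`. -/
def HasHeight {V : Affine K} (P : V.Point) (n : ℕ) : Prop :=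
  ∃ v : Fin 2 → F[X], IsMorphismOfDegree v n ∧ ∃ l : K, l ≠ 0 ∧ algebraMap F[X] K ∘ v = l • P.xRep

namespace HasHeight

variable {V : Affine K}

theorem zero : HasHeight F (0 : V.Point) 0 := by
  refine ⟨![1, 0], ⟨?_, ?_, ?_⟩, 1, one_ne_zero, ?_⟩
  · rw [Ideal.eq_top_iff_one]
    exact Ideal.subset_span ⟨0, rfl⟩
  · simp [Fin.forall_fin_two]
  · exact Function.ne_iff.2 ⟨0, by simp⟩
  · ext i
    fin_cases i <;> simp

theorem neg {P : V.Point} {n : ℕ} (h : HasHeight F P n) : HasHeight F (-P) n := by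
  rwa [HasHeight, Affine.Point.xRep_neg]

variable [Algebra F K] [IsScalarTower F F[X] K] [FaithfulSMul F[X] K] [DecidableEq K]
  {W : WeierstrassCurve F} [W.IsElliptic]

theorem parallelogram {P Q : Affine.Point (W⁄K)} {r s d : ℕ} (hP : HasHeight F P r)
    (hQ : HasHeight F Q s) (hPQ : HasHeight F (P - Q) d) :
    ∃ e, HasHeight F (P + Q) e ∧ e + d = 2 * (r + s) := by
  obtain ⟨u, hu, k, hk, hku⟩ := hP
  obtain ⟨v, hv, l, hl, hlv⟩ := hQ
  obtain ⟨t, ht, m, hm, hmt⟩ := hPQ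
  obtain ⟨μ, hμ, hadd⟩ := exists_addSub_sym2x P Q
  have hW : (W.map C).map (algebraMap F[X] K) = W⁄K := by
    rw [WeierstrassCurve.map_map, ← algebraMap_eq, ← IsScalarTower.algebraMap_eq]
    rfl
  have hw : algebraMap F[X] K ∘ addSub (W.map C) (symMul u v) =
      symMul (((k * l) ^ 2 * μ * m⁻¹) • (P + Q).xRep) (algebraMap F[X] K ∘ t) := by
    rw [map_comp_addSub, hW, map_comp_symMul, hku, hlv, hmt, symMul_smul_smul, symMul_smul_smul,
      addSub_smul, ← sym2x_eq_symMul, hadd, smul_smul, inv_mul_cancel_right₀ hm, sym2x_eq_symMul]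
  obtain ⟨e, he⟩ := exists_eq_comp_of_symMul (algebraMap F[X] K) ht.span_eq_top hw
  have hew : symMul e t = addSub (W.map C) (symMul u v) := by
    apply (FaithfulSMul.algebraMap_injective F[X] K).comp_left
    simp only [map_comp_symMul, ← he, hw]
  obtain ⟨n, hn, hnd⟩ := (hew ▸ (hu.symMul hv).addSub W).of_symMul ht
  exact ⟨n, ⟨e, hn, _, mul_ne_zero (mul_ne_zero (pow_ne_zero 2 (mul_ne_zero hk hl)) hμ)
    (inv_ne_zero hm), he.symm⟩, hnd⟩

theorem add_zsmul {P Q : Affine.Point (W⁄K)} {a b c : ℕ} (hP : HasHeight F P a)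
    (hQ : HasHeight F Q b) (hPQ : HasHeight F (P - Q) c) (n : ℤ) :
    ∃ e : ℕ, HasHeight F (P + n • Q) e ∧ (e : ℤ) = b * n ^ 2 + (a + b - c) * n + a := by
  suffices h : (∃ d : ℕ, HasHeight F (P + n • Q - Q) d ∧
      (d : ℤ) = b * (n - 1) ^ 2 + (a + b - c) * (n - 1) + a) ∧
      ∃ e : ℕ, HasHeight F (P + n • Q) e ∧ (e : ℤ) = b * n ^ 2 + (a + b - c) * n + a from h.2
  induction n using Int.induction_on with
  | zero => exact ⟨⟨c, by simpa, by ring⟩, a, by simpa, by ring⟩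
  | succ n ih =>
    obtain ⟨⟨d, hd, hd'⟩, e, he, he'⟩ := ih
    obtain ⟨r, hr, hr'⟩ := he.parallelogram hQ hd
    refine ⟨⟨e, by rwa [add_smul, one_smul, ← add_assoc, add_sub_cancel_right], ?_⟩,
      r, by rwa [add_smul, one_smul, ← add_assoc], ?_⟩
    · rw [he']; ring
    · zify at hr'
      linear_combination hr' + 2 * he' - hd'
  | pred n ih =>
    obtain ⟨⟨d, hd, hd'⟩, e, he, he'⟩ := ih
    obtain ⟨r, hr, hr'⟩ := hd.parallelogram hQ.neg (by rwa [sub_neg_eq_add, sub_add_cancel])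
    rw [← sub_eq_add_neg] at hr
    refine ⟨⟨r, by rwa [sub_smul, one_smul, ← add_sub_assoc], ?_⟩,
      d, by rwa [sub_smul, one_smul, ← add_sub_assoc], hd'⟩
    zify at hr'
    linear_combination hr' + 2 * hd' - he'

theorem quadraticForm_nonneg {P Q : Affine.Point (W⁄K)} {a b c : ℕ} (hP : HasHeight F P a)
    (hQ : HasHeight F Q b) (hPQ : HasHeight F (P - Q) c) (m n : ℤ) :
    0 ≤ a * m ^ 2 + (a + b - c) * m * n + b * n ^ 2 := by
  obtain ⟨e, he, he'⟩ := hP.add_zsmul hQ hPQ n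
  obtain ⟨d, hd, hd'⟩ := zero.add_zsmul hQ (by rw [zero_sub]; exact hQ.neg) n
  obtain ⟨r, -, hr⟩ := he.add_zsmul hP (by rwa [zero_add, ← add_sub_cancel_left P (n • Q)] at hd)
    (m - 1)
  calc (0 : ℤ) ≤ r := r.cast_nonneg
    _ = _ := by
      push_cast at hd'
      rw [hr, he', hd']
      ring

end HasHeight

end Height

section TraceSequence

theorem eval_add_dickson_one_mul {A : Type*} [CommRing A] (x y : A) (n : ℕ) :
    (dickson 1 (x * y) n).eval (x + y) = x ^ n + y ^ n := by
  induction n using Nat.twoStepInduction with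
  | zero => norm_num
  | one => simp
  | more n ih₀ ih₁ =>
    rw [dickson_add_two, eval_sub, eval_mul, eval_mul, eval_X, eval_C, ih₀, ih₁]
    ring

variable {R : Type*} [CommRing R] (W : WeierstrassCurve R)

/-- The polynomial `h = a₁X + a₃` in the Weierstrass equation `Y² + hY = f`. -/
noncomputable def weierstrassLin : R[X] :=
  C W.a₁ * X + C W.a₃

/-- The polynomial `f = X³ + a₂X² + a₄X + a₆` in the Weierstrass equation `Y² + hY = f`. -/
noncomputable def weierstrassCubic : R[X] :=
  X ^ 3 + C W.a₂ * X ^ 2 + C W.a₄ * X + C W.a₆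

theorem negY_eq_neg_sub_eval (c y : R) :
    W.toAffine.negY c y = -y - (weierstrassLin W).eval c := by
  simp [Affine.negY, weierstrassLin, sub_sub]

theorem equation_iff_eval {c y : R} : W.toAffine.Equation c y ↔
    y ^ 2 + (weierstrassLin W).eval c * y = (weierstrassCubic W).eval c := by
  rw [Affine.equation_iff]
  simp [weierstrassLin, weierstrassCubic, add_mul, add_assoc]

/-- The trace `Yⁿ + (-Y - h)ⁿ` from the coordinate ring of `W` to `R[X]` of the `n`-th power of
`Y`, which is a Dickson polynomial in the trace `-h` and the norm `-f` of `Y`. -/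
noncomputable def tracePow (n : ℕ) : R[X] :=
  (dickson 1 (-weierstrassCubic W) n).eval (-weierstrassLin W)

theorem tracePow_zero : tracePow W 0 = 2 := by
  norm_num [tracePow]

theorem tracePow_one : tracePow W 1 = -weierstrassLin W := by
  simp [tracePow]

theorem tracePow_add_two (n : ℕ) : tracePow W (n + 2) =
    weierstrassCubic W * tracePow W n - weierstrassLin W * tracePow W (n + 1) := by
  rw [tracePow, dickson_add_two, eval_sub, eval_mul, eval_mul, eval_X, eval_C, tracePow, tracePow]
  ring

theorem natDegree_weierstrassCubic_le : (weierstrassCubic W).natDegree ≤ 3 := by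
  rw [weierstrassCubic]
  compute_degree

theorem natDegree_weierstrassLin_le : (weierstrassLin W).natDegree ≤ 1 :=
  natDegree_linear_le

theorem two_mul_natDegree_tracePow_le (n : ℕ) : 2 * (tracePow W n).natDegree ≤ 3 * n := by
  induction n using Nat.twoStepInduction with
  | zero => simp [tracePow_zero]
  | one => linarith [natDegree_weierstrassLin_le W, congrArg natDegree (tracePow_one W),
      natDegree_neg (weierstrassLin W)]
  | more n ih₀ ih₁ =>
    rw [tracePow_add_two]
    have h₀ := natDegree_mul_le_of_le (natDegree_weierstrassCubic_le W)
      (tracePow W n).natDegree.le_refl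
    have h₁ := natDegree_mul_le_of_le (natDegree_weierstrassLin_le W)
      (tracePow W (n + 1)).natDegree.le_refl
    have h := natDegree_sub_le_of_le h₀ h₁
    lia

theorem aeval_tracePow {A : Type*} [CommRing A] [Algebra R A] {x y : A}
    (h : y ^ 2 + aeval x (weierstrassLin W) * y = aeval x (weierstrassCubic W)) (n : ℕ) :
    aeval x (tracePow W n) = y ^ n + (-y - aeval x (weierstrassLin W)) ^ n := by
  let φ : R[X] →+* A := (aeval x).toRingHom
  have hφ (p : R[X]) : φ p = aeval x p := rfl
  rw [← eval_add_dickson_one_mul, tracePow, ← hφ, ← eval_map_apply, map_dickson, map_neg, map_neg,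
    hφ, hφ, ← h]
  congr <;> ring

theorem eval_derivative_tracePow {c y : R} (hy : 2 * y + (weierstrassLin W).eval c = 0)
    (hc : y ^ 2 + (weierstrassLin W).eval c * y = (weierstrassCubic W).eval c) (n : ℕ) :
    (derivative (tracePow W (n + 2))).eval c =
      (n + 2) * (n + 1) * y ^ n * (derivative (weierstrassCubic W)).eval c -
        (n + 2) ^ 2 * y ^ (n + 1) * W.a₁ := by
  have hval (n : ℕ) : (tracePow W n).eval c = 2 * y ^ n := by
    have hy' : -y - (weierstrassLin W).eval c = y := by linear_combination -hy
    rw [← coe_aeval_eq_eval] at hc hy' ⊢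
    rw [aeval_tracePow W hc, hy', two_mul]
  have hrec (n : ℕ) : (derivative (tracePow W (n + 2))).eval c =
      (derivative (weierstrassCubic W)).eval c * (2 * y ^ n) -
        y ^ 2 * (derivative (tracePow W n)).eval c - W.a₁ * (2 * y ^ (n + 1)) +
        2 * y * (derivative (tracePow W (n + 1))).eval c := by
    have hl : (derivative (weierstrassLin W)).eval c = W.a₁ := by simp [weierstrassLin]
    rw [tracePow_add_two, derivative_sub, derivative_mul, derivative_mul, eval_sub, eval_add,
      eval_add, eval_mul, eval_mul, eval_mul, eval_mul, hval, hval, hl, ← hc]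
    linear_combination (derivative (tracePow W n)).eval c * y * hy -
      (derivative (tracePow W (n + 1))).eval c * hy
  have h₀ : (derivative (tracePow W 0)).eval c = 0 := by
    simp [tracePow_zero]
  have h₁ : (derivative (tracePow W 1)).eval c = -W.a₁ := by
    simp [tracePow_one, weierstrassLin]
  induction n using Nat.twoStepInduction with
  | zero =>
    rw [hrec, h₀, h₁]
    push_cast
    ring
  | one =>
    rw [hrec, hrec, h₀, h₁]
    push_cast
    ring
  | more n ih₀ ih₁ =>
    rw [hrec, ih₀, ih₁]
    push_cast
    ring

end TraceSequence

section FrobeniusSub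

theorem equation_baseChange_iff {R A : Type*} [CommRing R] [CommRing A] [Algebra R A]
    (W : WeierstrassCurve R) (x y : A) : Affine.Equation (W⁄A) x y ↔
      y ^ 2 + aeval x (weierstrassLin W) * y = aeval x (weierstrassCubic W) := by
  rw [Affine.equation_iff]
  simp [weierstrassLin, weierstrassCubic, add_mul, add_assoc]

variable {F : Type*} [Field F] [Fintype F] (W : WeierstrassCurve F)

/-- The numerator of the `x`-coordinate of `φ(P) - P` over the denominator `(X ^ q - X) ^ 2`, where
`P = (X, Y)` and `φ` is the Frobenius endomorphism of the field `F` with `q` elements. -/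
noncomputable def frobeniusSubNum : F[X] :=
  expand F (Fintype.card F) (weierstrassCubic W) + weierstrassCubic W +
    tracePow W (Fintype.card F + 1) -
    (C W.a₂ + X + X ^ Fintype.card F) * (X ^ Fintype.card F - X) ^ 2

theorem natDegree_frobeniusSubNum :
    (frobeniusSubNum W).natDegree = 2 * Fintype.card F + 1 := by
  have hq := Fintype.one_lt_card (α := F)
  have hT := two_mul_natDegree_tracePow_le W (Fintype.card F + 1)
  set q := Fintype.card F
  let A : F[X] := X ^ (q + 2) + C (2 * W.a₂) * X ^ (q + 1) + C W.a₄ * X ^ q + C W.a₄ * X +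
    C (2 * W.a₆) + tracePow W (q + 1)
  have hA : A.natDegree ≤ 2 * q := by
    have : (tracePow W (q + 1)).natDegree ≤ 2 * q := by lia
    dsimp only [A]
    compute_degree
    lia
  have hN : frobeniusSubNum W = X ^ (2 * q + 1) + A := by
    simp only [frobeniusSubNum, weierstrassCubic, A, map_add, map_mul, map_pow, map_ofNat, expand_C,
      expand_X]
    ring
  rw [hN, natDegree_add_eq_left_of_natDegree_lt, natDegree_X_pow]
  rw [natDegree_X_pow]
  lia

theorem aeval_frobeniusSubNum {K : Type*} [Field K] [Algebra F K] [DecidableEq K] {x y : K}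
    (h : Affine.Equation (W⁄K) x y) (hx : x ^ Fintype.card F ≠ x) :
    aeval x (frobeniusSubNum W) = (x ^ Fintype.card F - x) ^ 2 *
      Affine.addX (W⁄K) (x ^ Fintype.card F) x (Affine.slope (W⁄K) (x ^ Fintype.card F) x
        (y ^ Fintype.card F) (Affine.negY (W⁄K) x y)) := by
  let φ := FiniteField.frobeniusAlgHom F K
  have hφ (z : K) : z ^ Fintype.card F = φ z := rfl
  have e := (equation_baseChange_iff W x y).1 h
  have hT : aeval x (tracePow W (Fintype.card F + 1)) =
      φ y * y + (-φ y - aeval (φ x) (weierstrassLin W)) * (-y - aeval x (weierstrassLin W)) := by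
    rw [aeval_tracePow W e, pow_succ, pow_succ, hφ, hφ, map_sub, map_neg, aeval_algHom_apply]
  have e' : φ y ^ 2 + aeval (φ x) (weierstrassLin W) * φ y = aeval (φ x) (weierstrassCubic W) := by
    rw [aeval_algHom_apply, aeval_algHom_apply, ← map_pow, ← map_mul, ← map_add, e]
  have hl : aeval (φ x) (weierstrassLin W) =
      aeval x (weierstrassLin W) + algebraMap F K W.a₁ * (φ x - x) := by
    simp only [weierstrassLin, map_add, map_mul, aeval_C, aeval_X]
    ring
  have hy : Affine.negY (W⁄K) x y = -y - aeval x (weierstrassLin W) := by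
    simp [Affine.negY, weierstrassLin, sub_sub]
  have hd : φ x - x ≠ 0 := sub_ne_zero.2 hx
  rw [frobeniusSubNum, Affine.addX, Affine.slope_of_X_ne hx, hφ, hφ, hy, map_sub, map_add, map_add,
    expand_aeval, hφ, hT, ← e, ← e']
  simp only [map_add, map_sub, map_mul, map_pow, aeval_C, aeval_X, hφ, Affine.baseChange_a₁,
    Affine.baseChange_a₂]
  field_simp
  rw [hl]
  ring

end FrobeniusSub

section Counting

variable {F : Type*} [Field F] [Fintype F] {W : WeierstrassCurve F} {c y : F}

theorem eval_frobeniusSubNum (h : W.toAffine.Equation c y) :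
    (frobeniusSubNum W).eval c = (y - W.toAffine.negY c y) ^ 2 := by
  rw [equation_iff_eval] at h
  have hT := aeval_tracePow W (A := F) h (Fintype.card F + 1)
  simp only [pow_succ _ (Fintype.card F), FiniteField.pow_card, coe_aeval_eq_eval] at hT
  simp only [frobeniusSubNum, eval_add, eval_sub, eval_mul, eval_pow, eval_X, expand_eval,
    FiniteField.pow_card, hT, negY_eq_neg_sub_eval, sub_self]
  linear_combination -2 * h

theorem eval_derivative_frobeniusSubNum (h : W.toAffine.Equation c y)
    (hy : y = W.toAffine.negY c y) :
    (derivative (frobeniusSubNum W)).eval c = 3 * c ^ 2 + 2 * W.a₂ * c + W.a₄ - W.a₁ * y := by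
  rw [equation_iff_eval] at h
  obtain ⟨n, hn⟩ := Nat.exists_eq_add_one_of_ne_zero (Fintype.card_ne_zero (α := F))
  have hq : (n : F) + 1 = 0 := by exact_mod_cast hn ▸ FiniteField.cast_card_eq_zero F
  have hT := eval_derivative_tracePow W (by linear_combination hy + negY_eq_neg_sub_eval W c y) h n
  have hc (z : F) : z ^ (n + 1) = z := hn ▸ FiniteField.pow_card z
  have hf : (derivative (weierstrassCubic W)).eval c = 3 * c ^ 2 + 2 * W.a₂ * c + W.a₄ := by
    simp only [weierstrassCubic, derivative_add, derivative_C_mul, derivative_C, derivative_X_pow,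
      derivative_X, eval_add, eval_mul, eval_C, eval_pow, eval_X, eval_one, eval_zero]
    push_cast
    ring
  simp only [frobeniusSubNum, hn, derivative_sub, derivative_add, derivative_mul, derivative_pow,
    derivative_expand, derivative_X, eval_add, eval_sub, eval_mul, eval_pow, eval_natCast, eval_X,
    eval_one, expand_eval, Nat.add_sub_cancel, Nat.cast_add_one, hT, hc, hf]
  rw [hq]
  linear_combination -W.a₁ * y * (n + 3) * hq

theorem eval_derivative_frobeniusSubNum_ne_zero (h : W.toAffine.Nonsingular c y)
    (hy : y = W.toAffine.negY c y) : (derivative (frobeniusSubNum W)).eval c ≠ 0 := by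
  rw [eval_derivative_frobeniusSubNum h.1 hy]
  rcases ((W.toAffine.nonsingular_iff c y).1 h).2 with hx | hy'
  · contrapose! hx
    linear_combination -hx
  · exact absurd hy hy'

theorem frobeniusSubNum_ne_zero : frobeniusSubNum W ≠ 0 :=
  ne_zero_of_natDegree_gt (n := 0) (by rw [natDegree_frobeniusSubNum]; lia)

variable [W.IsElliptic] {G : F[X]}

theorem X_pow_card_sub_X_sq_ne_zero : (X ^ Fintype.card F - X : F[X]) ^ 2 ≠ 0 :=
  pow_ne_zero 2 (FiniteField.X_pow_card_sub_X_ne_zero F Fintype.one_lt_card)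

theorem rootMultiplicity_add_card_fibre_le (hN : G ∣ frobeniusSubNum W)
    (hD : G ∣ (X ^ Fintype.card F - X) ^ 2) (c : F) :
    G.rootMultiplicity c + {y | W.toAffine.Equation c y}.ncard ≤ 2 := by
  classical
  rcases Set.eq_empty_or_nonempty {y | W.toAffine.Equation c y} with hempty | ⟨y, hy⟩
  · rw [hempty, Set.ncard_empty]
    calc G.rootMultiplicity c ≤ ((X ^ Fintype.card F - X) ^ 2 : F[X]).rootMultiplicity c :=
          rootMultiplicity_le_rootMultiplicity_of_dvd X_pow_card_sub_X_sq_ne_zero hD c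
      _ = 2 := by
        rw [← count_roots, roots_pow, FiniteField.roots_X_pow_card_sub_X, Multiset.count_nsmul,
          Multiset.count_eq_one_of_mem Finset.univ.nodup (Finset.mem_univ c)]
  have hfib : {y | W.toAffine.Equation c y} ⊆ {y, W.toAffine.negY c y} :=
    fun z hz ↦ Affine.Y_eq_of_X_eq hz hy rfl
  have hG := rootMultiplicity_le_rootMultiplicity_of_dvd frobeniusSubNum_ne_zero hN c
  by_cases hyy : y = W.toAffine.negY c y
  · rw [← hyy, Set.pair_eq_singleton] at hfib
    have hcard := Set.ncard_le_ncard hfib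
    have hmult : ¬ 1 < (frobeniusSubNum W).rootMultiplicity c := by
      rw [one_lt_rootMultiplicity_iff_isRoot frobeniusSubNum_ne_zero]
      exact fun h ↦ eval_derivative_frobeniusSubNum_ne_zero
        ((Affine.equation_iff_nonsingular ..).1 hy) hyy h.2
    rw [Set.ncard_singleton] at hcard
    lia
  · have hcard := (Set.ncard_le_ncard hfib).trans_eq (Set.ncard_pair hyy)
    have hmult : (frobeniusSubNum W).rootMultiplicity c = 0 := by
      refine rootMultiplicity_eq_zero ?_
      rw [IsRoot, eval_frobeniusSubNum hy]
      exact pow_ne_zero 2 (sub_ne_zero.2 hyy)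
    lia

theorem card_point_eq_sum_ncard [Fintype W.toAffine.Point] :
    Fintype.card W.toAffine.Point = 1 + ∑ c, {y | W.toAffine.Equation c y}.ncard := by
  let e := W.toAffine.pointEquiv.trans
    (Equiv.subtypeProdEquivSigmaSubtype W.toAffine.Equation).optionCongr
  rw [← Nat.card_eq_fintype_card, Nat.card_congr e, Finite.card_option, Nat.card_sigma, add_comm]
  rfl

theorem natDegree_add_card_point_le [Fintype W.toAffine.Point] (hN : G ∣ frobeniusSubNum W)
    (hD : G ∣ (X ^ Fintype.card F - X) ^ 2) :
    G.natDegree + Fintype.card W.toAffine.Point ≤ 2 * Fintype.card F + 1 := by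
  classical
  have hsplits : (X ^ Fintype.card F - X : F[X]).Splits := by
    simpa using (FiniteField.isSplittingField_sub F F).splits
  have hG : G.natDegree = ∑ c, G.rootMultiplicity c := by
    rw [((hsplits.pow 2).of_dvd X_pow_card_sub_X_sq_ne_zero hD).natDegree_eq_card_roots]
    simp only [← count_roots]
    exact (Multiset.sum_count_eq_card fun c _ ↦ Finset.mem_univ c).symm
  rw [hG, card_point_eq_sum_ncard, add_left_comm, ← Finset.sum_add_distrib, add_comm]
  gcongr
  calc _ ≤ ∑ _ : F, 2 := Finset.sum_le_sum fun c _ ↦ rootMultiplicity_add_card_fibre_le hN hD c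
    _ = 2 * Fintype.card F := by simp [mul_comm]

end Counting

section FunctionField

variable {F : Type*} [Field F]

theorem isMorphismOfDegree_of_isCoprime {a b : F[X]} (h : IsCoprime a b) :
    IsMorphismOfDegree ![a, b] (max a.natDegree b.natDegree) := by
  have hspan : Ideal.span (Set.range ![a, b]) = ⊤ := by
    rw [Matrix.range_cons_cons_empty, Ideal.eq_top_iff_one, Ideal.mem_span_pair]
    exact h
  obtain ⟨n, hn⟩ := exists_isMorphismOfDegree hspan
  have hmax : n = max a.natDegree b.natDegree := le_antisymm
    (hn.le_of_natDegree_le (by simp [Fin.forall_fin_two]))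
    (max_le (hn.natDegree_le 0) (hn.natDegree_le 1))
  rwa [← hmax]

namespace HasHeight

variable {K : Type*} [Field K] [Algebra F[X] K] [FaithfulSMul F[X] K] {V : Affine K} {x y : K}

theorem exists_of_mul_eq (h : V.Nonsingular x y) {n m : F[X]} (hm : m ≠ 0)
    (hx : algebraMap F[X] K n = algebraMap F[X] K m * x) : ∃ g d, g ∣ n ∧ g ∣ m ∧
      HasHeight F (.some x y h) d ∧ d + g.natDegree = max n.natDegree m.natDegree := by
  obtain ⟨b, a, g, hab, rfl, rfl⟩ := UniqueFactorizationMonoid.exists_reduced_factors m hm n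
  have hg : g ≠ 0 := left_ne_zero_of_mul hm
  have hb : b ≠ 0 := right_ne_zero_of_mul hm
  have hinj := FaithfulSMul.algebraMap_injective F[X] K
  refine ⟨g, max a.natDegree b.natDegree, dvd_mul_right .., dvd_mul_right ..,
    ⟨_, isMorphismOfDegree_of_isCoprime hab.isCoprime.symm, algebraMap F[X] K b, ?_, ?_⟩, ?_⟩
  · exact (map_ne_zero_iff _ hinj).2 hb
  · have hax : algebraMap F[X] K a = algebraMap F[X] K b * x := by
      refine mul_left_cancel₀ ((map_ne_zero_iff _ hinj).2 hg) ?_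
      rw [← map_mul, hx, map_mul, mul_assoc]
    ext i
    fin_cases i <;> simp [hax]
  · rcases eq_or_ne a 0 with rfl | ha
    · simp [natDegree_mul hg hb, add_comm]
    · rw [natDegree_mul hg ha, natDegree_mul hg hb, Nat.add_max_add_left, add_comm]

theorem of_X_eq_algebraMap (h : V.Nonsingular x y) {n : F[X]} (hx : x = algebraMap F[X] K n) :
    HasHeight F (.some x y h) n.natDegree := by
  obtain ⟨g, d, -, hg, hd, hdg⟩ := exists_of_mul_eq (n := n) h one_ne_zero (by simp [hx])
  rw [natDegree_eq_zero_of_isUnit (isUnit_of_dvd_one hg), natDegree_one, add_zero,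
    Nat.max_zero] at hdg
  rwa [← hdg]

end HasHeight

theorem exists_equation_functionField (W : WeierstrassCurve F) :
    ∃ y, Affine.Equation (W⁄W.toAffine.FunctionField)
      (algebraMap F[X] W.toAffine.FunctionField X) y := by
  let φ : F[X][X] →+* W.toAffine.FunctionField :=
    (algebraMap W.toAffine.CoordinateRing _).comp (Affine.CoordinateRing.mk W)
  have hφ : φ (X ^ 2 + C (weierstrassLin W) * X - C (weierstrassCubic W)) = 0 :=
    (congrArg (algebraMap W.toAffine.CoordinateRing _) AdjoinRoot.mk_self).trans (map_zero _)
  have hC (p : F[X]) : φ (C p) = aeval (algebraMap F[X] W.toAffine.FunctionField X) p := by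
    rw [aeval_algebraMap_apply, aeval_X_left_apply]
    rfl
  refine ⟨φ X, (equation_baseChange_iff ..).2 ?_⟩
  rw [map_sub, map_add, map_mul, map_pow, hC, hC, sub_eq_zero] at hφ
  exact hφ

theorem exists_hasHeight_frobenius_sub [Fintype F] (W : WeierstrassCurve F) [W.IsElliptic]
    [Fintype W.toAffine.Point] {K : Type*} [Field K] [DecidableEq K] [Algebra F K] [Algebra F[X] K]
    [IsScalarTower F F[X] K] [FaithfulSMul F[X] K] {y : K}
    (h : Affine.Equation (W⁄K) (algebraMap F[X] K X) y) :
    ∃ (P Q : Affine.Point (W⁄K)) (d : ℕ), HasHeight F P (Fintype.card F) ∧ HasHeight F Q 1 ∧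
      HasHeight F (P - Q) d ∧ Fintype.card W.toAffine.Point ≤ d := by
  set x := algebraMap F[X] K X
  let q := Fintype.card F
  let D : F[X] := X ^ q - X
  have hDx : algebraMap F[X] K D = x ^ q - x := by rw [map_sub, map_pow]
  have hD : D ≠ 0 := FiniteField.X_pow_card_sub_X_ne_zero F Fintype.one_lt_card
  have hne : x ^ q ≠ x := by
    rwa [← sub_ne_zero, ← hDx, Ne, FaithfulSMul.algebraMap_eq_zero_iff]
  have h' : Affine.Equation (W⁄K) (x ^ q) (y ^ q) :=
    Affine.Equation.baseChange (FiniteField.frobeniusAlgHom F K) h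
  have hW : (W⁄K).IsElliptic := inferInstanceAs (W.map (algebraMap F K)).IsElliptic
  rw [Affine.equation_iff_nonsingular] at h h'
  have hP : HasHeight F (.some _ _ h') q := by
    simpa using HasHeight.of_X_eq_algebraMap h' (map_pow (algebraMap F[X] K) X q).symm
  have hQ : HasHeight F (.some _ _ h) 1 := by
    simpa using HasHeight.of_X_eq_algebraMap h (rfl : x = algebraMap F[X] K X)
  obtain ⟨g, d, hgN, hgD, hd, hdg⟩ := HasHeight.exists_of_mul_eq (n := frobeniusSubNum W)
    (Affine.nonsingular_add h' ((Affine.nonsingular_neg ..).2 h) fun hxy ↦ hne hxy.1)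
    (pow_ne_zero 2 hD) <| by
      rw [map_pow, hDx, ← aeval_frobeniusSubNum W h.1 hne, aeval_algebraMap_apply,
        aeval_X_left_apply]
  refine ⟨_, _, d, hP, hQ, ?_, ?_⟩
  · rwa [sub_eq_add_neg, Affine.Point.neg_some, Affine.Point.add_of_X_ne hne]
  · have hcard := natDegree_add_card_point_le hgN hgD
    rw [natDegree_frobeniusSubNum] at hdg
    lia

end FunctionField

section Hasse

theorem discrim_nonpos_of_forall_int {a b c : ℤ}
    (h : ∀ m n : ℤ, 0 ≤ a * m ^ 2 + b * m * n + c * n ^ 2) : discrim a b c ≤ 0 := by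
  have h₁ := h (-b) (2 * a)
  have h₂ := h (2 * c) (-b)
  have ha : 0 ≤ a := by simpa using h 1 0
  have hc : 0 ≤ c := by simpa using h 0 1
  rw [discrim]
  rcases ha.eq_or_lt with rfl | ha
  · rcases hc.eq_or_lt with rfl | hc
    · nlinarith [h 1 (-b)]
    · nlinarith
  · nlinarith

variable {F : Type*} [Field F] [Fintype F] (W : WeierstrassCurve F) [W.IsElliptic]
  [Fintype W.toAffine.Point]

theorem card_point_le : (Fintype.card W.toAffine.Point : ℝ) ≤
    Fintype.card F + 1 + 2 * √(Fintype.card F) := by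
  classical
  obtain ⟨y, hy⟩ := exists_equation_functionField W
  obtain ⟨P, Q, d, hP, hQ, hPQ, hd⟩ := exists_hasHeight_frobenius_sub W hy
  have hdisc := discrim_nonpos_of_forall_int (hP.quadraticForm_nonneg hQ hPQ)
  rw [discrim] at hdisc
  have hsq : (d - (Fintype.card F + 1) : ℝ) ^ 2 ≤ 2 ^ 2 * Fintype.card F := by
    have hdisc' : ((Fintype.card F + 1 - d : ℤ) : ℝ) ^ 2 - 4 * Fintype.card F * 1 ≤ 0 :=
      mod_cast hdisc
    push_cast at hdisc'
    linear_combination hdisc'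
  have hdle := Real.le_sqrt_of_sq_le hsq
  rw [Real.sqrt_mul (by positivity), Real.sqrt_sq zero_le_two] at hdle
  have hd' : (Fintype.card W.toAffine.Point : ℝ) ≤ d := mod_cast hd
  linarith

end Hasse

theorem card_eq_prime_of_point_of_order_general {F : Type*} [Field F] [Fintype F] [DecidableEq F]
    (W : Affine F) [W.IsElliptic] [Fintype W.Point] {N : ℕ}
    (hlt : (Fintype.card F : ℝ) + 1 + 2 * √(Fintype.card F) < 2 * N) {P : W.Point}
    (hP : addOrderOf P = N) : Fintype.card W.Point = N := by
  obtain ⟨k, hk⟩ : N ∣ Fintype.card W.Point := hP ▸ addOrderOf_dvd_card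
  have hcard : N * k < N * 2 := by
    have hcard' := (card_point_le W).trans_lt hlt
    rw [← hk, mul_comm N]
    exact_mod_cast hcard'
  have hk0 : k ≠ 0 := right_ne_zero_of_mul (hk ▸ Fintype.card_ne_zero)
  have hk2 : k < 2 := lt_of_mul_lt_mul_left' hcard
  obtain rfl : k = 1 := by lia
  rw [hk, mul_one]

/-- Let `N` be prime and `E` an elliptic curve over `F_p` with a point `P` of exact order
`N`, where `p + 1 + 2√p < 2N`. Then `#E(F_p) = N`, and `p` is prime. -/
theorem card_eq_prime_of_point_of_order (p N : ℕ) [Fact p.Prime] (hN : N.Prime)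
    (W : Affine (ZMod p)) [W.IsElliptic] [Fintype W.Point]
    (hlt : (p : ℝ) + 1 + 2 * Real.sqrt p < 2 * (N : ℝ))
    (P : W.Point) (hP : addOrderOf P = N) :
    Fintype.card W.Point = N ∧ p.Prime :=
  ⟨card_eq_prime_of_point_of_order_general W (by rwa [ZMod.card]) hP, Fact.out⟩
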